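/- Fix 0 < ε ≤ α ≤ 1, positive integers n, d with εn an integer, suppose α²n < dε, and set β = (1/n)·(1 − √(1 − α²n/(dε))). Let D₀ = N(0, I_d)^⊗n, and let D₁ be the distribution on (ℝ^d)^n obtained as follows: choose a uniformly random subset A ⊆ [n] of size εn; draw {X_i}_{i∈A} i.i.d. from N(0, I_d); set R_A = Σ_{i∈A} X_i; draw z ~ N(0, (α²/d)·I_d) independently; set μ = −β·R_A − z; and draw {X_i}_{i∉A} i.i.d. from N(μ, I_d). Then there is a sufficiently small absolute constant c > 0 such that if n ≤ c·min(d^{2/3}ε^{2/3}/α^{8/3}, dε/α²) and n ≥ √d/α² + dε³/α⁴, then d_TV(D₀, D₁) ≤ 0.1. -/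

import Mathlib

open MeasureTheory ProbabilityTheory
open scoped ENNReal

/-- Total variation distance between two measures: `sup_A |P(A) − Q(A)|` over measurable `A`. -/
noncomputable def tvDist {Ω : Type*} [MeasurableSpace Ω] (P Q : Measure Ω) : ℝ :=
  sSup {x : ℝ | ∃ A : Set Ω, MeasurableSet A ∧ x = |(P A).toReal - (Q A).toReal|}

/-- The Gaussian measure `N(μ, I_d)` on `ℝ^d`, as a product of one-dimensional Gaussians. -/
noncomputable def gaussPi (d : ℕ) (μ : Fin d → ℝ) : Measure (Fin d → ℝ) :=
  Measure.pi fun j => gaussianReal (μ j) 1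

/-!
The chi-square method. Conditionally on the clean set `A`, the `d` columns of the sample are
independent centred Gaussian vectors in `ℝ^n` whose covariance `Σ_A` is a perturbation of the
identity of rank two, supported on the indicators of `A` and `Aᶜ`. Writing `ℓ_A` for the likelihood
ratio of the mixture component `A` against `D₀`, Gaussian integration gives
`E[ℓ_A ℓ_B] = det (1 - (Σ_A - 1) (Σ_B - 1)) ^ (-d / 2)`, and Sylvester's identity turns this into an
explicit function of `|A ∩ B|`. The value of `β` is the one for which the variance of the shift,
`α² / d + β² |A|`, is `2 β ε`; with this choice the determinant is at least
`1 - 4 β² n x₊ - 8 β² ε⁴ n²` in terms of the centred overlap `x = |A ∩ B| - ε² n`. Averaging over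
`B` with the sub-Gaussian moment generating function of the hypergeometric overlap bounds the
chi-square divergence, hence the total variation distance.
-/

section ProductMeasure

variable {ι E : Type*} [Fintype ι] [MeasurableSpace E]

theorem lintegral_pi_prod {X : ι → Type*} [∀ i, MeasurableSpace (X i)] (μ : ∀ i, Measure (X i))
    [∀ i, SigmaFinite (μ i)] {f : ∀ i, X i → ℝ≥0∞} (hf : ∀ i, Measurable (f i)) :
    ∫⁻ x, ∏ i, f i (x i) ∂Measure.pi μ = ∏ i, ∫⁻ x, f i x ∂μ i := by
  classical
  rcases isEmpty_or_nonempty (∀ i, X i) with hX | ⟨⟨x₀⟩⟩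
  · obtain ⟨i, hi⟩ := isEmpty_pi.1 hX
    rw [lintegral_of_isEmpty, Finset.prod_eq_zero (Finset.mem_univ i) (lintegral_of_isEmpty ..)]
  have hprod (s : Finset ι) : Measurable fun x : ∀ i, X i => ∏ i ∈ s, f i (x i) :=
    Finset.measurable_fun_prod s fun i _ => (hf i).comp (measurable_pi_apply i)
  suffices h : ∀ s : Finset ι,
      (∫⋯∫⁻_s, fun x => ∏ i ∈ s, f i (x i) ∂μ) = fun _ => ∏ i ∈ s, ∫⁻ x, f i x ∂μ i by
    rw [lintegral_eq_lmarginal_univ x₀, h]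
  intro s
  induction s using Finset.induction_on with
  | empty => simp
  | insert i s hi ih =>
    have hpeel (x : ∀ i, X i) : ∫⁻ xᵢ, ∏ j ∈ insert i s, f j (Function.update x i xᵢ j) ∂μ i
        = (∫⁻ xᵢ, f i xᵢ ∂μ i) * ∏ j ∈ s, f j (x j) := by
      rw [← lintegral_mul_const _ (hf i)]
      refine lintegral_congr fun xᵢ => ?_
      rw [Finset.prod_insert hi, Function.update_self]
      congr 1
      refine Finset.prod_congr rfl fun j hj => ?_
      rw [Function.update_of_ne (ne_of_mem_of_not_mem hj hi)]
    rw [lmarginal_insert' _ (hprod _) hi]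
    simp_rw [hpeel]
    ext x
    rw [Finset.prod_insert hi, ← funext_iff.1 ih x]
    exact lintegral_const_mul _ ((hprod s).comp measurable_updateFinset)

theorem pi_withDensity {X : ι → Type*} [∀ i, MeasurableSpace (X i)] (μ : ∀ i, Measure (X i))
    [∀ i, SigmaFinite (μ i)] {f : ∀ i, X i → ℝ≥0∞} (hf : ∀ i, Measurable (f i))
    [∀ i, SigmaFinite ((μ i).withDensity (f i))] :
    Measure.pi (fun i => (μ i).withDensity (f i))
      = (Measure.pi μ).withDensity fun x => ∏ i, f i (x i) := by
  classical
  refine Measure.pi_eq fun s hs => ?_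
  have hind (x : ∀ i, X i) : (Set.univ.pi s).indicator (fun x => ∏ i, f i (x i)) x
      = ∏ i, (s i).indicator (f i) (x i) := by
    simp only [Set.indicator_apply, Finset.prod_ite_zero, Set.mem_univ_pi, Finset.mem_univ,
      forall_const]
  rw [withDensity_apply _ (.univ_pi hs), ← lintegral_indicator (.univ_pi hs)]
  simp_rw [hind]
  rw [lintegral_pi_prod μ fun i => (hf i).indicator (hs i)]
  simp_rw [withDensity_apply _ (hs _), lintegral_indicator (hs _)]

theorem pi_map_swap (κ : Type*) [Fintype κ] (γ : Measure E) [IsProbabilityMeasure γ] :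
    (Measure.pi fun _ : ι => Measure.pi fun _ : κ => γ).map Function.swap
      = Measure.pi fun _ : κ => Measure.pi fun _ : ι => γ := by
  have hcurry := Measure.infinitePi_map_curry fun (_ : ι) (_ : κ) => γ
  have hcurry' := Measure.infinitePi_map_curry fun (_ : κ) (_ : ι) => γ
  simp only [Measure.infinitePi_eq_pi] at hcurry hcurry'
  have hswap := (measurePreserving_piCongrLeft (fun _ : κ × ι => γ) (Equiv.prodComm ι κ)).map_eq
  rw [← hcurry, ← hcurry', ← hswap, Measure.map_map (by fun_prop) (by fun_prop),
    Measure.map_map (by fun_prop) (by fun_prop)]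
  rfl

theorem lintegral_pi_pi_prod {κ : Type*} [Fintype κ] (γ : Measure E) [IsProbabilityMeasure γ]
    {f : (ι → E) → ℝ≥0∞} (hf : Measurable f) :
    ∫⁻ X, ∏ j : κ, f (fun i => X i j) ∂(Measure.pi fun _ : ι => Measure.pi fun _ : κ => γ)
      = (∫⁻ x, f x ∂Measure.pi fun _ : ι => γ) ^ Fintype.card κ := by
  have hrows := lintegral_pi_prod (fun _ : κ => Measure.pi fun _ : ι => γ) fun _ => hf
  rw [Finset.prod_const, Finset.card_univ, ← pi_map_swap, lintegral_map ?_ ?_] at hrows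
  · exact hrows
  · fun_prop
  · fun_prop

end ProductMeasure

section ChiSquare

variable {Ω : Type*} [MeasurableSpace Ω]

theorem tvDist_le_of_forall {P Q : Measure Ω} {δ : ℝ}
    (h : ∀ s, MeasurableSet s → |P.real s - Q.real s| ≤ δ) : tvDist P Q ≤ δ := by
  refine csSup_le ⟨_, ∅, .empty, rfl⟩ ?_
  rintro _ ⟨s, hs, rfl⟩
  exact h s hs

variable {P : Measure Ω} [IsProbabilityMeasure P]

theorem integral_abs_le_sqrt_integral_sq {f : Ω → ℝ} (hf : MemLp f 2 P) :
    ∫ x, |f x| ∂P ≤ √(∫ x, f x ^ 2 ∂P) := by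
  refine Real.le_sqrt_of_sq_le ?_
  have hvar := variance_nonneg (fun x => |f x|) P
  rw [variance_eq_sub (show MemLp (fun x => |f x|) 2 P from hf.abs)] at hvar
  simpa using hvar

theorem integral_abs_one_sub_le_sqrt {l : Ω → ℝ} (hl : MemLp l 2 P) (hmean : ∫ x, l x ∂P = 1) :
    ∫ x, |1 - l x| ∂P ≤ √(∫ x, l x ^ 2 ∂P - 1) := by
  have hint : Integrable l P := hl.integrable one_le_two
  have hvar : ∫ x, (1 - l x) ^ 2 ∂P = ∫ x, l x ^ 2 ∂P - 1 := by
    have hexpand (x : Ω) : (1 - l x) ^ 2 = (1 - 2 * l x) + l x ^ 2 := by ring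
    have hint_lin : Integrable (fun x => 1 - 2 * l x) P :=
      (integrable_const _).sub (hint.const_mul 2)
    simp_rw [hexpand]
    rw [integral_add hint_lin hl.integrable_sq,
      integral_sub (integrable_const _) (hint.const_mul 2),
      integral_const_mul, hmean, integral_const, probReal_univ, one_smul]
    ring
  rw [← hvar]
  exact integral_abs_le_sqrt_integral_sq ((memLp_const 1).sub hl)

theorem tvDist_withDensity_le_sqrt {L : Ω → ℝ≥0∞} (hL : Measurable L)
    [IsProbabilityMeasure (P.withDensity L)] {χ : ℝ} (hχ0 : 0 ≤ χ)
    (hχ : ∫⁻ x, L x ^ 2 ∂P ≤ ENNReal.ofReal (1 + χ)) :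
    tvDist P (P.withDensity L) ≤ √χ := by
  have hL1 : ∫⁻ x, L x ∂P = 1 := by
    rw [← setLIntegral_univ, ← withDensity_apply _ .univ, measure_univ]
  have hL2 : ∫⁻ x, L x ^ 2 ∂P ≠ ⊤ := ne_top_of_le_ne_top ENNReal.ofReal_ne_top hχ
  have hL_lt_top : ∀ᵐ x ∂P, L x < ⊤ := ae_lt_top hL (by simp [hL1])
  set l : Ω → ℝ := fun x => (L x).toReal with hl
  have hmem : MemLp l 2 P := by
    rw [memLp_two_iff_integrable_sq hL.ennreal_toReal.aestronglyMeasurable]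
    simpa [hl] using integrable_toReal_of_lintegral_ne_top (hL.pow_const 2).aemeasurable hL2
  have hmean : ∫ x, l x ∂P = 1 := by
    rw [integral_toReal hL.aemeasurable hL_lt_top, hL1, ENNReal.toReal_one]
  have hsecond : ∫ x, l x ^ 2 ∂P ≤ 1 + χ := by
    simp only [hl, ← ENNReal.toReal_pow]
    rw [integral_toReal (hL.pow_const 2).aemeasurable (ae_lt_top (hL.pow_const 2) hL2)]
    exact ENNReal.toReal_le_of_le_ofReal (by positivity) hχ
  have hint : Integrable (fun x => 1 - l x) P :=
    (integrable_const _).sub (hmem.integrable one_le_two)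
  refine tvDist_le_of_forall fun s hs => ?_
  have hdiff : P.real s - (P.withDensity L).real s = ∫ x in s, (1 - l x) ∂P := by
    rw [integral_sub (integrable_const _) (hmem.integrable one_le_two).integrableOn,
      integral_toReal hL.aemeasurable (ae_restrict_of_ae hL_lt_top)]
    simp [measureReal_def, withDensity_apply _ hs]
  calc |P.real s - (P.withDensity L).real s| = |∫ x in s, (1 - l x) ∂P| := by rw [hdiff]
    _ ≤ ∫ x in s, |1 - l x| ∂P := abs_integral_le_integral_abs
    _ ≤ ∫ x, |1 - l x| ∂P :=
      setIntegral_le_integral hint.abs (.of_forall fun _ => abs_nonneg _)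
    _ ≤ √(∫ x, l x ^ 2 ∂P - 1) := integral_abs_one_sub_le_sqrt hmem hmean
    _ ≤ √χ := Real.sqrt_le_sqrt (by linarith)

theorem tvDist_uniform_mixture_le_sqrt {α : Type*} {S : Finset α} (hS : S.Nonempty)
    {Q : α → Measure Ω} [∀ a, IsProbabilityMeasure (Q a)] {L : α → Ω → ℝ≥0∞}
    (hL : ∀ a, Measurable (L a)) (hQ : ∀ a, Q a = P.withDensity (L a)) {χ : ℝ} (hχ0 : 0 ≤ χ)
    (hχ : ∀ a ∈ S, ∑ b ∈ S, ∫⁻ x, L a x * L b x ∂P ≤ S.card * ENNReal.ofReal (1 + χ)) :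
    tvDist P ((S.card : ℝ≥0∞)⁻¹ • ∑ a ∈ S, Q a) ≤ √χ := by
  have hcard : (S.card : ℝ≥0∞)⁻¹ * S.card = 1 :=
    ENNReal.inv_mul_cancel (by simpa using hS.ne_empty) (ENNReal.natCast_ne_top _)
  have hsum : Measurable fun x => ∑ a ∈ S, L a x := Finset.measurable_fun_sum S fun a _ => hL a
  have hmix : (S.card : ℝ≥0∞)⁻¹ • ∑ a ∈ S, Q a
      = P.withDensity fun x => (S.card : ℝ≥0∞)⁻¹ * ∑ a ∈ S, L a x := by
    ext s hs
    simp [hQ, withDensity_apply _ hs, lintegral_const_mul _ hsum,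
      lintegral_finsetSum S fun a _ => hL a]
  have : IsProbabilityMeasure (P.withDensity fun x => (S.card : ℝ≥0∞)⁻¹ * ∑ a ∈ S, L a x) :=
    ⟨by rw [← hmix]; simp [hcard]⟩
  rw [hmix]
  refine tvDist_withDensity_le_sqrt (hsum.const_mul _) hχ0 ?_
  have hLL (a b : α) : Measurable fun x => L a x * L b x := (hL a).mul (hL b)
  calc ∫⁻ x, ((S.card : ℝ≥0∞)⁻¹ * ∑ a ∈ S, L a x) ^ 2 ∂P
      = (S.card : ℝ≥0∞)⁻¹ ^ 2 * ∑ a ∈ S, ∑ b ∈ S, ∫⁻ x, L a x * L b x ∂P := by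
        simp_rw [mul_pow, sq (∑ a ∈ S, L a _), Finset.sum_mul_sum]
        rw [lintegral_const_mul _ (by fun_prop),
          lintegral_finsetSum S fun a _ => Finset.measurable_fun_sum S fun b _ => hLL a b]
        simp_rw [lintegral_finsetSum S fun b _ => hLL _ b]
    _ ≤ (S.card : ℝ≥0∞)⁻¹ ^ 2 * ∑ _a ∈ S, S.card * ENNReal.ofReal (1 + χ) := by
        gcongr with a ha
        exact hχ a ha
    _ = ((S.card : ℝ≥0∞)⁻¹ * S.card) ^ 2 * ENNReal.ofReal (1 + χ) := by
        rw [Finset.sum_const, nsmul_eq_mul]; ring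
    _ = ENNReal.ofReal (1 + χ) := by rw [hcard, one_pow, one_mul]

end ChiSquare

section Resampling

variable {ι E H : Type*} [DecidableEq ι] [MeasurableSpace E] [MeasurableSpace H]

theorem measurable_piecewise_prod (A : Finset ι) :
    Measurable fun q : (ι → E) × (ι → E) => A.piecewise q.1 q.2 := by
  refine measurable_pi_iff.2 fun i => ?_
  by_cases hi : i ∈ A <;> simp only [Finset.piecewise, hi, if_true, if_false] <;> fun_prop

theorem measurable_comp_piecewise (A : Finset ι) {F : (ι → E) × H → ℝ≥0∞} (hF : Measurable F) :
    Measurable fun q : ((ι → E) × H) × (ι → E) => F (A.piecewise q.1.1 q.2, q.1.2) := by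
  have hpiecewise : Measurable fun q : ((ι → E) × H) × (ι → E) => A.piecewise q.1.1 q.2 :=
    (measurable_piecewise_prod A).comp
      (f := fun q : ((ι → E) × H) × (ι → E) => (q.1.1, q.2)) (by fun_prop)
  fun_prop

variable [Fintype ι]

theorem measurePreserving_piecewise (A : Finset ι) (γ : Measure E) [IsProbabilityMeasure γ] :
    MeasurePreserving (fun q : (ι → E) × (ι → E) => A.piecewise q.1 q.2)
      ((Measure.pi fun _ => γ).prod (Measure.pi fun _ => γ)) (Measure.pi fun _ => γ) := by
  refine ⟨measurable_piecewise_prod A, (Measure.pi_eq fun s hs => ?_).symm⟩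
  have hpre : (fun q : (ι → E) × (ι → E) => A.piecewise q.1 q.2) ⁻¹' Set.univ.pi s
      = (Set.univ.pi (A.piecewise s fun _ => Set.univ)) ×ˢ
        (Set.univ.pi (A.piecewise (fun _ => Set.univ) s)) := by
    ext q
    simp only [Set.mem_preimage, Set.mem_univ_pi, Set.mem_prod, Finset.piecewise, ← forall_and]
    refine forall_congr' fun i => ?_
    by_cases hi : i ∈ A <;> simp [hi]
  rw [Measure.map_apply (measurable_piecewise_prod A) (.univ_pi hs), hpre, Measure.prod_prod,
    Measure.pi_pi, Measure.pi_pi, ← Finset.prod_mul_distrib]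
  refine Finset.prod_congr rfl fun i _ => ?_
  by_cases hi : i ∈ A <;> simp [hi]

theorem pi_ite_dirac_eq_map (A : Finset ι) (γ ν : Measure E) [IsProbabilityMeasure γ]
    [IsProbabilityMeasure ν] (y : ι → E) :
    (Measure.pi fun i => if i ∈ A then Measure.dirac (y i) else ν)
      = (Measure.pi fun i => if i ∈ A then γ else ν).map fun x => A.piecewise y x := by
  let g (i : ι) : E → E := if i ∈ A then fun _ => y i else id
  have hg (i : ι) : Measurable (g i) := by
    by_cases hi : i ∈ A <;> simp only [g, hi, if_true, if_false] <;> fun_prop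
  have (i : ι) : IsProbabilityMeasure (if i ∈ A then γ else ν) := by
    split_ifs <;> infer_instance
  have (i : ι) : IsProbabilityMeasure ((if i ∈ A then γ else ν).map (g i)) :=
    Measure.isProbabilityMeasure_map (hg i).aemeasurable
  have hpiecewise : (fun x => A.piecewise y x) = fun x i => g i (x i) := by
    ext x i
    by_cases hi : i ∈ A <;> simp [g, hi]
  rw [hpiecewise, Measure.pi_map_pi fun i => (hg i).aemeasurable]
  congr 1
  ext1 i
  by_cases hi : i ∈ A <;> simp [g, hi]

theorem pi_ite_withDensity (A : Finset ι) (γ : Measure E) [IsProbabilityMeasure γ] {w : E → ℝ≥0∞}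
    (hw : Measurable w) [IsProbabilityMeasure (γ.withDensity w)] :
    (Measure.pi fun i => if i ∈ A then γ else γ.withDensity w)
      = (Measure.pi fun _ => γ).withDensity fun x => ∏ i ∈ Aᶜ, w (x i) := by
  let v (i : ι) : E → ℝ≥0∞ := if i ∈ A then 1 else w
  have hv (i : ι) : Measurable (v i) := by
    by_cases hi : i ∈ A <;> simp only [v, hi, if_true, if_false] <;> fun_prop
  have hwith (i : ι) : (if i ∈ A then γ else γ.withDensity w) = γ.withDensity (v i) := by
    by_cases hi : i ∈ A <;> simp [v, hi]
  have hprob (i : ι) : IsProbabilityMeasure (γ.withDensity (v i)) := by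
    rw [← hwith]; split_ifs <;> infer_instance
  have hprod (x : ι → E) : ∏ i, v i (x i) = ∏ i ∈ Aᶜ, w (x i) := by
    rw [← Finset.prod_mul_prod_compl A, Finset.prod_eq_one fun i hi => by simp [v, hi], one_mul]
    exact Finset.prod_congr rfl fun i hi => by simp [v, Finset.mem_compl.1 hi]
  simp_rw [hwith, pi_withDensity _ hv, hprod]

theorem lintegral_pi_ite_dirac (A : Finset ι) (γ : Measure E) [IsProbabilityMeasure γ] (y : ι → E)
    {w : E → ℝ≥0∞} (hw : Measurable w) [IsProbabilityMeasure (γ.withDensity w)]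
    {f : (ι → E) → ℝ≥0∞} (hf : Measurable f) :
    ∫⁻ x, f x ∂(Measure.pi fun i => if i ∈ A then Measure.dirac (y i) else γ.withDensity w)
      = ∫⁻ x, (∏ i ∈ Aᶜ, w (x i)) * f (A.piecewise y x) ∂Measure.pi fun _ => γ := by
  have hpiecewise : Measurable fun x : ι → E => A.piecewise y x :=
    (measurable_piecewise_prod A).comp (measurable_const.prodMk measurable_id)
  rw [pi_ite_dirac_eq_map A γ, pi_ite_withDensity A γ hw, lintegral_map hf hpiecewise]
  exact lintegral_withDensity_eq_lintegral_mul _ (by fun_prop) (hf.comp hpiecewise)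

variable {A : Finset ι} {γ : Measure E} [IsProbabilityMeasure γ] {ζ : Measure H}
  [IsProbabilityMeasure ζ]

theorem lintegral_lintegral_piecewise {F : (ι → E) × H → ℝ≥0∞} (hF : Measurable F) :
    ∫⁻ q, ∫⁻ x, F (A.piecewise q.1 x, q.2) ∂(Measure.pi fun _ => γ)
        ∂((Measure.pi fun _ => γ).prod ζ)
      = ∫⁻ x, ∫⁻ z, F (x, z) ∂ζ ∂(Measure.pi fun _ => γ) := by
  rw [lintegral_prod_symm' _ (measurable_comp_piecewise A hF).lintegral_prod_right',
    lintegral_lintegral_swap (f := fun x z => F (x, z)) hF.aemeasurable]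
  refine lintegral_congr fun z => ?_
  have hFz : Measurable fun x => F (x, z) := hF.comp (measurable_id.prodMk measurable_const)
  rw [← (measurePreserving_piecewise A γ).lintegral_comp hFz]
  exact (lintegral_prod _ (hFz.comp (measurable_piecewise_prod A)).aemeasurable).symm

theorem bind_pi_ite_dirac {w : (ι → E) → H → E → ℝ≥0∞}
    (hw : Measurable fun q : ((ι → E) × H) × E => w q.1.1 q.1.2 q.2)
    (hprob : ∀ y z, IsProbabilityMeasure (γ.withDensity (w y z)))
    (hdep : ∀ z, DependsOn (fun y => w y z) (A : Set ι)) :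
    (((Measure.pi fun _ => γ).prod ζ).bind fun q =>
        Measure.pi fun i => if i ∈ A then Measure.dirac (q.1 i) else γ.withDensity (w q.1 q.2))
      = (Measure.pi fun _ => γ).withDensity fun x => ∫⁻ z, ∏ i ∈ Aᶜ, w x z (x i) ∂ζ := by
  set κ : (ι → E) × H → Measure (ι → E) := fun q =>
    Measure.pi fun i => if i ∈ A then Measure.dirac (q.1 i) else γ.withDensity (w q.1 q.2) with hκ
  let F (s : Set (ι → E)) (q : (ι → E) × H) : ℝ≥0∞ :=
    (∏ i ∈ Aᶜ, w q.1 q.2 (q.1 i)) * s.indicator 1 q.1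
  have hF {s : Set (ι → E)} (hs : MeasurableSet s) : Measurable (F s) :=
    (Finset.measurable_fun_prod _ fun i _ => hw.comp
      (measurable_id.prodMk ((measurable_pi_apply i).comp measurable_fst))).mul
      ((measurable_one.indicator hs).comp measurable_fst)
  have hκ_apply {s : Set (ι → E)} (hs : MeasurableSet s) (q : (ι → E) × H) :
      κ q s = ∫⁻ x, F s (A.piecewise q.1 x, q.2) ∂Measure.pi fun _ => γ := by
    have hwq : Measurable (w q.1 q.2) :=
      hw.comp (f := fun x => (q, x)) (measurable_const.prodMk measurable_id)
    rw [← lintegral_indicator_one hs, hκ,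
      lintegral_pi_ite_dirac A γ q.1 hwq (measurable_one.indicator hs)]
    refine lintegral_congr fun x => ?_
    have hagree : w (A.piecewise q.1 x) q.2 = w q.1 q.2 :=
      hdep q.2 fun i hi => A.piecewise_eq_of_mem _ _ hi
    simp only [F, hagree]
    congr 1
    refine Finset.prod_congr rfl fun i hi => ?_
    rw [A.piecewise_eq_of_notMem _ _ (Finset.mem_compl.1 hi)]
  have hκ_meas : Measurable κ := by
    refine Measure.measurable_of_measurable_coe _ fun s hs => ?_
    simp_rw [hκ_apply hs]
    exact (measurable_comp_piecewise A (hF hs)).lintegral_prod_right'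
  ext s hs
  rw [Measure.bind_apply hs hκ_meas.aemeasurable, withDensity_apply _ hs, ← lintegral_indicator hs]
  simp_rw [hκ_apply hs]
  rw [lintegral_lintegral_piecewise (hF hs)]
  refine lintegral_congr fun x => ?_
  by_cases hx : x ∈ s <;> simp [F, hx]

end Resampling

section GaussianIntegrals

open scoped NNReal

theorem gaussianReal_eq_withDensity_exp (μ : ℝ) {v : ℝ≥0} (hv : v ≠ 0) :
    gaussianReal μ v = (gaussianReal 0 v).withDensity fun x =>
      ENNReal.ofReal (Real.exp ((μ * x - μ ^ 2 / 2) / v)) := by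
  rw [gaussianReal_of_var_ne_zero _ hv, gaussianReal_of_var_ne_zero _ hv,
    ← withDensity_mul _ (measurable_gaussianPDF 0 v) (by fun_prop)]
  congr 1
  ext x
  have hv' : (v : ℝ) ≠ 0 := by exact_mod_cast hv
  simp only [Pi.mul_apply, gaussianPDF, gaussianPDFReal]
  rw [← ENNReal.ofReal_mul (by positivity), mul_assoc _ (Real.exp _), ← Real.exp_add]
  congr 3
  field_simp
  ring

theorem lintegral_exp_quadratic_gaussianReal (v q : ℝ≥0) (c : ℝ) :
    ∫⁻ z, ENNReal.ofReal (Real.exp (c * z - q * z ^ 2 / 2)) ∂gaussianReal 0 v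
      = ENNReal.ofReal ((√(1 + q * v))⁻¹ * Real.exp (c ^ 2 * v / (2 * (1 + q * v)))) := by
  rcases eq_or_ne v 0 with rfl | hv
  · simp
  set v' : ℝ≥0 := v / (1 + q * v) with hv'_def
  have hv'_ne : v' ≠ 0 := by positivity
  have hv'_coe : (v' : ℝ) = v / (1 + q * v) := by simp [hv'_def]
  set m : ℝ := c * v / (1 + q * v) with hm
  have hcomplete_square (z : ℝ) : gaussianPDF 0 v z
        * ENNReal.ofReal (Real.exp (c * z - q * z ^ 2 / 2))
      = ENNReal.ofReal ((√(1 + q * v))⁻¹ * Real.exp (c ^ 2 * v / (2 * (1 + q * v))))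
        * gaussianPDF m v' z := by
    have hsqrt : (√(2 * Real.pi * v))⁻¹ = (√(1 + q * v))⁻¹ * (√(2 * Real.pi * v'))⁻¹ := by
      rw [← mul_inv, ← Real.sqrt_mul (by positivity), hv'_coe]
      congr 2
      field_simp
    simp only [gaussianPDF, gaussianPDFReal]
    rw [← ENNReal.ofReal_mul (by positivity), ← ENNReal.ofReal_mul (by positivity), hsqrt,
      mul_assoc _ (Real.exp _), ← Real.exp_add, mul_mul_mul_comm, ← Real.exp_add, hv'_coe, hm]
    congr 3
    field_simp
    ring
  rw [gaussianReal_of_var_ne_zero 0 hv, lintegral_withDensity_eq_lintegral_mul _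
    (measurable_gaussianPDF 0 v) (by fun_prop)]
  simp only [Pi.mul_apply, hcomplete_square]
  rw [lintegral_const_mul _ (measurable_gaussianPDF m v'), lintegral_gaussianPDF_eq_one m hv'_ne,
    mul_one]

variable {ι : Type*} [Fintype ι]

theorem pi_gaussianReal_eq_withDensity :
    (Measure.pi fun _ : ι => gaussianReal 0 1) = (volume : Measure (ι → ℝ)).withDensity fun y =>
      ENNReal.ofReal ((√(2 * Real.pi))⁻¹ ^ Fintype.card ι * Real.exp (-(y ⬝ᵥ y) / 2)) := by
  have hpdf : gaussianReal 0 1 = volume.withDensity (gaussianPDF 0 1) :=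
    gaussianReal_of_var_ne_zero 0 one_ne_zero
  have : SigmaFinite (volume.withDensity (gaussianPDF 0 1)) := by rw [← hpdf]; infer_instance
  have hprod (y : ι → ℝ) : ∏ i, gaussianPDF 0 1 (y i)
      = ENNReal.ofReal ((√(2 * Real.pi))⁻¹ ^ Fintype.card ι * Real.exp (-(y ⬝ᵥ y) / 2)) := by
    simp only [gaussianPDF, gaussianPDFReal]
    rw [← ENNReal.ofReal_prod_of_nonneg fun i _ => by positivity, Finset.prod_mul_distrib,
      ← Real.exp_sum]
    simp [dotProduct, Finset.sum_div, neg_div, sq]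
  rw [hpdf, pi_withDensity (fun _ => volume) fun _ => measurable_gaussianPDF 0 1]
  simp_rw [hprod]
  rfl

variable [DecidableEq ι]

open scoped MatrixOrder Matrix in
theorem lintegral_exp_quadratic_pi_gaussianReal {M : Matrix ι ι ℝ} (hM : M.PosDef) :
    ∫⁻ y, ENNReal.ofReal (Real.exp ((y ⬝ᵥ y - y ⬝ᵥ M *ᵥ y) / 2))
        ∂(Measure.pi fun _ : ι => gaussianReal 0 1)
      = ENNReal.ofReal (√M.det)⁻¹ := by
  obtain ⟨B, hB⟩ := CStarAlgebra.nonneg_iff_eq_star_mul_self.mp hM.posSemidef.nonneg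
  replace hB : M = Bᵀ * B := by
    rw [hB, Matrix.star_eq_conjTranspose, Matrix.conjTranspose_eq_transpose_of_trivial]
  have hdet : M.det = B.det ^ 2 := by rw [hB, Matrix.det_mul, Matrix.det_transpose, sq]
  have hB0 : B.det ≠ 0 := fun h => by simpa [hdet, h] using hM.det_pos
  set φ : (ι → ℝ) → ℝ≥0∞ := fun y =>
    ENNReal.ofReal ((√(2 * Real.pi))⁻¹ ^ Fintype.card ι * Real.exp (-(y ⬝ᵥ y) / 2)) with hφ
  have hφ_meas : Measurable φ := by simp only [hφ, dotProduct]; fun_prop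
  have hφ_one : ∫⁻ y, φ y = 1 := by
    rw [← setLIntegral_univ, ← withDensity_apply _ .univ, hφ, ← pi_gaussianReal_eq_withDensity,
      measure_univ]
  have hsubst (y : ι → ℝ) :
      φ y * ENNReal.ofReal (Real.exp ((y ⬝ᵥ y - y ⬝ᵥ M *ᵥ y) / 2)) = φ (Matrix.toLin' B y) := by
    have hquad : B *ᵥ y ⬝ᵥ B *ᵥ y = y ⬝ᵥ M *ᵥ y := by
      rw [hB, ← Matrix.mulVec_mulVec, Matrix.dotProduct_mulVec y, Matrix.vecMul_transpose]
    simp only [hφ, Matrix.toLin'_apply, hquad]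
    rw [← ENNReal.ofReal_mul (by positivity), mul_assoc, ← Real.exp_add]
    congr 3
    ring
  have hB_meas : Measurable (Matrix.toLin' B) :=
    (LinearMap.continuous_of_finiteDimensional _).measurable
  rw [pi_gaussianReal_eq_withDensity, lintegral_withDensity_eq_lintegral_mul _ hφ_meas
    (by simp only [dotProduct, Matrix.mulVec]; fun_prop)]
  change ∫⁻ y, φ y * _ = _
  simp_rw [hsubst]
  rw [← lintegral_map hφ_meas hB_meas, Real.map_matrix_volume_pi_eq_smul_volume_pi hB0,
    lintegral_smul_measure, hφ_one, hdet, Real.sqrt_sq_eq_abs, abs_inv, smul_eq_mul, mul_one]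

open scoped Matrix in
/-- The likelihood ratio of the centred Gaussian with covariance matrix `S` to the standard
Gaussian on `ℝ^ι`. -/
noncomputable def gaussLR (S : Matrix ι ι ℝ) (x : ι → ℝ) : ℝ≥0∞ :=
  ENNReal.ofReal ((√S.det)⁻¹ * Real.exp ((x ⬝ᵥ x - x ⬝ᵥ S⁻¹ *ᵥ x) / 2))

open scoped Matrix in
theorem measurable_gaussLR (S : Matrix ι ι ℝ) : Measurable (gaussLR S) := by
  unfold gaussLR
  simp only [dotProduct, Matrix.mulVec]
  fun_prop

open scoped Matrix in
theorem lintegral_gaussLR {S : Matrix ι ι ℝ} (hS : S.PosDef) :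
    ∫⁻ x, gaussLR S x ∂(Measure.pi fun _ : ι => gaussianReal 0 1) = 1 := by
  have hdet := hS.det_pos
  simp only [gaussLR, ENNReal.ofReal_mul (inv_nonneg.2 (Real.sqrt_nonneg _))]
  rw [lintegral_const_mul _ (by simp only [dotProduct, Matrix.mulVec]; fun_prop),
    lintegral_exp_quadratic_pi_gaussianReal hS.inv, ← ENNReal.ofReal_mul (by positivity),
    Matrix.det_nonsing_inv, Ring.inverse_eq_inv', Real.sqrt_inv, inv_inv,
    inv_mul_cancel₀ (Real.sqrt_ne_zero'.2 hdet), ENNReal.ofReal_one]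

open scoped Matrix in
theorem lintegral_gaussLR_mul_gaussLR {S T : Matrix ι ι ℝ} (hS : 0 < S.det) (hT : 0 < T.det)
    (hST : (S⁻¹ + T⁻¹ - 1).PosDef) :
    ∫⁻ x, gaussLR S x * gaussLR T x ∂(Measure.pi fun _ : ι => gaussianReal 0 1)
      = ENNReal.ofReal (√(1 - (S - 1) * (T - 1)).det)⁻¹ := by
  have hdet : (1 - (S - 1) * (T - 1)).det = S.det * (S⁻¹ + T⁻¹ - 1).det * T.det := by
    have hmul : S * (S⁻¹ + T⁻¹ - 1) * T = T + S - S * T := by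
      rw [mul_sub, mul_add, Matrix.mul_nonsing_inv _ hS.ne'.isUnit, sub_mul, add_mul, mul_assoc S,
        Matrix.nonsing_inv_mul _ hT.ne'.isUnit, one_mul, mul_one]
    rw [← Matrix.det_mul, ← Matrix.det_mul, hmul]
    congr 1
    noncomm_ring
  have hprod (x : ι → ℝ) : gaussLR S x * gaussLR T x
      = ENNReal.ofReal ((√S.det)⁻¹ * (√T.det)⁻¹)
        * ENNReal.ofReal (Real.exp ((x ⬝ᵥ x - x ⬝ᵥ (S⁻¹ + T⁻¹ - 1) *ᵥ x) / 2)) := by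
    simp only [gaussLR]
    rw [← ENNReal.ofReal_mul (by positivity), ← ENNReal.ofReal_mul (by positivity),
      mul_mul_mul_comm, ← Real.exp_add, Matrix.sub_mulVec, Matrix.add_mulVec, Matrix.one_mulVec,
      dotProduct_sub, dotProduct_add]
    congr 3
    ring
  simp_rw [hprod]
  rw [lintegral_const_mul _ (by simp only [dotProduct, Matrix.mulVec]; fun_prop),
    lintegral_exp_quadratic_pi_gaussianReal hST, ← ENNReal.ofReal_mul (by positivity), hdet,
    Real.sqrt_mul (mul_nonneg hS.le hST.det_pos.le), Real.sqrt_mul hS.le, mul_inv, mul_inv]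
  congr 1
  ring

end GaussianIntegrals

section ColumnCovariance

open scoped Matrix NNReal

variable {ι : Type*} [DecidableEq ι] (A B : Finset ι)

/-- The matrix whose two columns are the indicator vectors of `A` and `Aᶜ`. -/
def blockIndicator : Matrix ι (Fin 2) ℝ :=
  Matrix.of fun i => if i ∈ A then ![1, 0] else ![0, 1]

/-- The covariance matrix of one coordinate of a sample from the mixture component with clean set
`A`: standard Gaussians on `A`, and standard Gaussians shifted by the common random amount
`-β ∑_{i ∈ A} x i - z` with `z ~ N(0, v)` on `Aᶜ`. -/
def columnCov (β : ℝ) (v : ℝ≥0) : Matrix ι ι ℝ :=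
  1 + blockIndicator A * !![0, -β; -β, v + β ^ 2 * A.card] * (blockIndicator A)ᵀ

variable (β : ℝ) (v : ℝ≥0)

theorem isHermitian_columnCov : (columnCov A β v).IsHermitian := by
  have hC : Matrix.IsHermitian !![0, -β; -β, v + β ^ 2 * A.card] := by
    ext i j
    fin_cases i <;> fin_cases j <;> simp
  simpa only [columnCov, Matrix.conjTranspose_eq_transpose_of_trivial] using
    Matrix.isHermitian_one.add (Matrix.isHermitian_mul_mul_conjTranspose (blockIndicator A) hC)

variable [Fintype ι]

theorem transpose_blockIndicator_mulVec (x : ι → ℝ) :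
    (blockIndicator A)ᵀ *ᵥ x = ![∑ i ∈ A, x i, ∑ i ∈ Aᶜ, x i] := by
  ext j
  fin_cases j <;>
    simp [blockIndicator, Matrix.mulVec, dotProduct, ite_apply, Finset.sum_ite, Finset.filter_not,
      Finset.compl_eq_univ_sdiff]

theorem transpose_blockIndicator_mul_blockIndicator :
    (blockIndicator A)ᵀ * blockIndicator B
      = !![((A ∩ B).card : ℝ), A.card - (A ∩ B).card;
        B.card - (A ∩ B).card, Fintype.card ι - A.card - B.card + (A ∩ B).card] := by
  have hentry (i j : Fin 2) : ((blockIndicator A)ᵀ * blockIndicator B) i j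
      = ![∑ l ∈ A, blockIndicator B l j, ∑ l ∈ Aᶜ, blockIndicator B l j] i := by
    rw [← transpose_blockIndicator_mulVec]
    rfl
  have hA : ((A ∩ B).card : ℝ) + (A \ B).card = A.card := by
    exact_mod_cast Finset.card_inter_add_card_sdiff A B
  have hB : ((Aᶜ ∩ B).card : ℝ) + (A ∩ B).card = B.card := by
    rw [Finset.inter_comm Aᶜ, ← Finset.sdiff_eq_inter_compl, Finset.inter_comm A]
    exact_mod_cast Finset.card_sdiff_add_card_inter B A
  have hAc : ((Aᶜ ∩ B).card : ℝ) + (Aᶜ \ B).card = Aᶜ.card := by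
    exact_mod_cast Finset.card_inter_add_card_sdiff Aᶜ B
  have hcompl : (A.card : ℝ) + Aᶜ.card = Fintype.card ι := by
    exact_mod_cast A.card_add_card_compl
  ext i j
  rw [hentry]
  fin_cases i <;> fin_cases j <;>
    simp [blockIndicator, ite_apply, Finset.sum_ite, Finset.filter_mem_eq_inter,
      Finset.filter_notMem_eq_sdiff] <;>
    linarith

theorem transpose_blockIndicator_mul_self :
    (blockIndicator A)ᵀ * blockIndicator A = !![(A.card : ℝ), 0; 0, Aᶜ.card] := by
  simp [transpose_blockIndicator_mul_blockIndicator, A.card_compl, A.card_le_univ]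

theorem det_columnCov : (columnCov A β v).det = 1 + Aᶜ.card * v := by
  rw [columnCov, Matrix.mul_assoc, Matrix.det_one_add_mul_comm, Matrix.mul_assoc,
    transpose_blockIndicator_mul_self, Matrix.det_fin_two]
  simp
  ring

theorem inv_columnCov :
    (columnCov A β v)⁻¹ = 1 - blockIndicator A
      * ((1 + Aᶜ.card * (v : ℝ))⁻¹ • !![-(Aᶜ.card * β ^ 2), -β; -β, (v : ℝ)])
      * (blockIndicator A)ᵀ := by
  refine Matrix.inv_eq_right_inv ?_
  have hpos : 1 + Aᶜ.card * (v : ℝ) ≠ 0 := by positivity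
  set U := blockIndicator A
  set C : Matrix (Fin 2) (Fin 2) ℝ := !![0, -β; -β, v + β ^ 2 * A.card] with hC
  set K : Matrix (Fin 2) (Fin 2) ℝ :=
    (1 + Aᶜ.card * (v : ℝ))⁻¹ • !![-(Aᶜ.card * β ^ 2), -β; -β, (v : ℝ)] with hK
  have hwoodbury : C - K - C * (Uᵀ * U) * K = 0 := by
    rw [transpose_blockIndicator_mul_self, hC, hK]
    ext i j
    fin_cases i <;> fin_cases j <;> simp <;> field_simp <;> ring
  calc columnCov A β v * (1 - U * K * Uᵀ) = 1 + U * (C - K - C * (Uᵀ * U) * K) * Uᵀ := by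
        simp only [columnCov, Matrix.add_mul, Matrix.mul_sub, Matrix.sub_mul, Matrix.mul_assoc,
          Matrix.mul_one, Matrix.one_mul]
        abel
    _ = 1 := by rw [hwoodbury, Matrix.mul_zero, Matrix.zero_mul, add_zero]

/-- The quadratic form `x ↦ x ⬝ (1 - Σ⁻¹) x` for `Σ = columnCov A β v`. -/
noncomputable def columnForm (x : ι → ℝ) : ℝ :=
  (v * (∑ i ∈ Aᶜ, x i) ^ 2 - 2 * β * (∑ i ∈ A, x i) * (∑ i ∈ Aᶜ, x i)
    - Aᶜ.card * β ^ 2 * (∑ i ∈ A, x i) ^ 2) / (1 + Aᶜ.card * v)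

theorem dotProduct_inv_columnCov_mulVec (x : ι → ℝ) :
    x ⬝ᵥ (columnCov A β v)⁻¹ *ᵥ x = x ⬝ᵥ x - columnForm A β v x := by
  rw [inv_columnCov, Matrix.sub_mulVec, Matrix.one_mulVec, dotProduct_sub, ← Matrix.mulVec_mulVec,
    ← Matrix.mulVec_mulVec, Matrix.dotProduct_mulVec, ← Matrix.mulVec_transpose,
    transpose_blockIndicator_mulVec, columnForm]
  simp [Matrix.mulVec, dotProduct]
  ring

theorem gaussLR_columnCov (x : ι → ℝ) :
    gaussLR (columnCov A β v) x
      = ENNReal.ofReal ((√(1 + Aᶜ.card * v))⁻¹ * Real.exp (columnForm A β v x / 2)) := by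
  rw [gaussLR, det_columnCov, dotProduct_inv_columnCov_mulVec, sub_sub_cancel]

theorem lintegral_shifted_column (x : ι → ℝ) :
    ∫⁻ z, ∏ i ∈ Aᶜ, ENNReal.ofReal (Real.exp
        ((-(β * ∑ l ∈ A, x l) - z) * x i - (-(β * ∑ l ∈ A, x l) - z) ^ 2 / 2)) ∂gaussianReal 0 v
      = gaussLR (columnCov A β v) x := by
  set R := ∑ i ∈ A, x i with hR
  set S := ∑ i ∈ Aᶜ, x i with hS
  set m : ℝ≥0 := (Aᶜ.card : ℝ≥0) with hm
  have hprod (z : ℝ) : ∏ i ∈ Aᶜ, ENNReal.ofReal (Real.exp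
        ((-(β * R) - z) * x i - (-(β * R) - z) ^ 2 / 2))
      = ENNReal.ofReal (Real.exp (-(β * R * S) - m * (β * R) ^ 2 / 2))
        * ENNReal.ofReal (Real.exp (-(S + m * (β * R)) * z - m * z ^ 2 / 2)) := by
    rw [← ENNReal.ofReal_prod_of_nonneg fun _ _ => (Real.exp_pos _).le, ← Real.exp_sum,
      ← ENNReal.ofReal_mul (Real.exp_pos _).le, ← Real.exp_add, Finset.sum_sub_distrib,
      ← Finset.mul_sum, Finset.sum_const, ← hS, nsmul_eq_mul, hm, NNReal.coe_natCast]
    congr 2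
    ring
  simp_rw [hprod]
  have hden : (1 + Aᶜ.card * (v : ℝ)) ≠ 0 := by positivity
  rw [lintegral_const_mul _ (by fun_prop), lintegral_exp_quadratic_gaussianReal,
    ← ENNReal.ofReal_mul (Real.exp_pos _).le, mul_left_comm, ← Real.exp_add, gaussLR_columnCov,
    columnForm, ← hR, ← hS, hm, NNReal.coe_natCast]
  congr 3
  field_simp
  ring

theorem columnForm_le (x : ι → ℝ) :
    columnForm A β v x ≤ (|β| + v) * Fintype.card ι * (x ⬝ᵥ x) := by
  have hsplit : ∑ i ∈ A, x i ^ 2 + ∑ i ∈ Aᶜ, x i ^ 2 = x ⬝ᵥ x := by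
    rw [Finset.sum_add_sum_compl]
    simp only [dotProduct, sq]
  have hcauchy (s : Finset ι) : (∑ i ∈ s, x i) ^ 2 ≤ Fintype.card ι * ∑ i ∈ s, x i ^ 2 :=
    (sq_sum_le_card_mul_sum_sq).trans (by gcongr; exact s.card_le_univ)
  set R := ∑ i ∈ A, x i
  set S := ∑ i ∈ Aᶜ, x i
  have hRS : R ^ 2 + S ^ 2 ≤ Fintype.card ι * (x ⬝ᵥ x) := by
    rw [← hsplit, mul_add]
    exact add_le_add (hcauchy A) (hcauchy Aᶜ)
  have hcross : -(2 * β * R * S) ≤ |β| * (R ^ 2 + S ^ 2) := by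
    have := neg_abs_le (β * (R * S))
    rw [abs_mul, abs_mul] at this
    nlinarith [abs_nonneg β, two_mul_le_add_sq |R| |S|, sq_abs R, sq_abs S]
  have hnum : v * S ^ 2 - 2 * β * R * S - Aᶜ.card * β ^ 2 * R ^ 2
      ≤ (|β| + v) * (R ^ 2 + S ^ 2) := by
    have : 0 ≤ Aᶜ.card * β ^ 2 * R ^ 2 := by positivity
    nlinarith [mul_nonneg v.coe_nonneg (sq_nonneg R)]
  calc columnForm A β v x ≤ (|β| + v) * (R ^ 2 + S ^ 2) :=
        div_le_of_le_mul₀ (by positivity) (by positivity)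
          (hnum.trans (le_mul_of_one_le_right (by positivity) (by simp [mul_nonneg])))
    _ ≤ (|β| + v) * (Fintype.card ι * (x ⬝ᵥ x)) := by gcongr
    _ = _ := by ring

theorem posDef_inv_columnCov_sub_half_smul_one (h : (|β| + v) * Fintype.card ι < 1 / 2) :
    ((columnCov A β v)⁻¹ - (1 / 2 : ℝ) • 1).PosDef := by
  refine .of_dotProduct_mulVec_pos ?_ fun x hx => ?_
  · exact (isHermitian_columnCov A β v).inv.sub (Matrix.isHermitian_one.smul rfl)
  have hxx : 0 < x ⬝ᵥ x := by simpa using Matrix.dotProduct_star_self_pos_iff.2 hx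
  rw [star_trivial, Matrix.sub_mulVec, Matrix.smul_mulVec, Matrix.one_mulVec, dotProduct_sub,
    dotProduct_inv_columnCov_mulVec, dotProduct_smul, smul_eq_mul]
  nlinarith [columnForm_le A β v x]

theorem posDef_inv_columnCov_add_inv_columnCov_sub_one (h : (|β| + v) * Fintype.card ι < 1 / 2) :
    ((columnCov A β v)⁻¹ + (columnCov B β v)⁻¹ - 1).PosDef := by
  convert (posDef_inv_columnCov_sub_half_smul_one A β v h).add
    (posDef_inv_columnCov_sub_half_smul_one B β v h) using 1
  module

theorem posDef_columnCov (h : (|β| + v) * Fintype.card ι < 1 / 2) :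
    (columnCov A β v).PosDef := by
  rw [← Matrix.posDef_inv_iff, ← sub_add_cancel (columnCov A β v)⁻¹ ((1 / 2 : ℝ) • 1)]
  exact (posDef_inv_columnCov_sub_half_smul_one A β v h).add (Matrix.PosDef.one.smul one_half_pos)

theorem det_one_sub_mul_self_fin_two (M : Matrix (Fin 2) (Fin 2) ℝ) :
    (1 - M * M).det = (1 + M.det) ^ 2 - M.trace ^ 2 := by
  simp only [Matrix.det_fin_two, Matrix.trace_fin_two, Matrix.sub_apply, Matrix.mul_apply,
    Fin.sum_univ_two, Matrix.one_apply]
  simp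
  ring

/-- The value of `det (1 - (Σ_A - 1) * (Σ_B - 1))` for the covariance matrices `Σ_A`, `Σ_B` of
`columnCov`, when `A` and `B` are `k`-subsets of an `n`-set with `r` common elements. -/
def overlapDet (n k β v r : ℝ) : ℝ :=
  (1 - β ^ 2 * (r * n - k ^ 2)) ^ 2
    - ((v + β ^ 2 * k) * (n - 2 * k + r) - 2 * β * (k - r)) ^ 2

theorem det_one_sub_columnCov_sub_one_mul (hcard : A.card = B.card) :
    (1 - (columnCov A β v - 1) * (columnCov B β v - 1)).det
      = overlapDet (Fintype.card ι) A.card β v (A ∩ B).card := by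
  set C : Matrix (Fin 2) (Fin 2) ℝ := !![0, -β; -β, v + β ^ 2 * A.card] with hC
  set G := (blockIndicator A)ᵀ * blockIndicator B with hG
  have hG_eq : G = !![((A ∩ B).card : ℝ), A.card - (A ∩ B).card;
      A.card - (A ∩ B).card, Fintype.card ι - A.card - A.card + (A ∩ B).card] := by
    rw [hG, transpose_blockIndicator_mul_blockIndicator, hcard]
  have hG_symm : (blockIndicator B)ᵀ * blockIndicator A = G := by
    rw [hG_eq, transpose_blockIndicator_mul_blockIndicator, hcard, Finset.inter_comm]
  have hmul : (columnCov A β v - 1) * (columnCov B β v - 1)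
      = blockIndicator A * (C * G * C * (blockIndicator B)ᵀ) := by
    simp only [columnCov, add_sub_cancel_left, ← hcard, hG, Matrix.mul_assoc, hC]
  have hdet : (1 - (columnCov A β v - 1) * (columnCov B β v - 1)).det
      = (1 - (C * G) * (C * G)).det := by
    rw [hmul, Matrix.det_one_sub_mul_comm, Matrix.mul_assoc, hG_symm, Matrix.mul_assoc (C * G)]
  rw [hdet, det_one_sub_mul_self_fin_two, hG_eq]
  simp [hC, Matrix.det_fin_two, Matrix.trace_fin_two, overlapDet]
  ring

theorem lintegral_gaussLR_columnCov_mul (hcard : A.card = B.card)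
    (h : (|β| + v) * Fintype.card ι < 1 / 2) :
    ∫⁻ x, gaussLR (columnCov A β v) x * gaussLR (columnCov B β v) x
        ∂(Measure.pi fun _ : ι => gaussianReal 0 1)
      = ENNReal.ofReal (√(overlapDet (Fintype.card ι) A.card β v (A ∩ B).card))⁻¹ := by
  have hdet_pos (A : Finset ι) : 0 < (columnCov A β v).det := by rw [det_columnCov]; positivity
  rw [lintegral_gaussLR_mul_gaussLR (hdet_pos A) (hdet_pos B)
      (posDef_inv_columnCov_add_inv_columnCov_sub_one A B β v h),
    det_one_sub_columnCov_sub_one_mul A B β v hcard]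

end ColumnCovariance

section ShiftedSample

open scoped NNReal

instance isProbabilityMeasure_gaussPi (d : ℕ) (μ : Fin d → ℝ) :
    IsProbabilityMeasure (gaussPi d μ) := by
  unfold gaussPi
  infer_instance

theorem gaussPi_zero (d : ℕ) : gaussPi d 0 = Measure.pi fun _ => gaussianReal 0 1 := rfl

theorem gaussPi_eq_withDensity (d : ℕ) (μ : Fin d → ℝ) :
    gaussPi d μ = (gaussPi d 0).withDensity fun x =>
      ∏ j, ENNReal.ofReal (Real.exp (μ j * x j - μ j ^ 2 / 2)) := by
  have hcoord (m : ℝ) : gaussianReal m 1 = (gaussianReal 0 1).withDensity fun x =>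
      ENNReal.ofReal (Real.exp (m * x - m ^ 2 / 2)) := by
    simpa using gaussianReal_eq_withDensity_exp m one_ne_zero
  have (j : Fin d) : IsProbabilityMeasure ((gaussianReal 0 1).withDensity fun x =>
      ENNReal.ofReal (Real.exp (μ j * x - μ j ^ 2 / 2))) := by
    rw [← hcoord]
    infer_instance
  simp only [gaussPi, Pi.zero_apply]
  rw [← pi_withDensity (fun _ => gaussianReal 0 1)
    (f := fun j x => ENNReal.ofReal (Real.exp (μ j * x - μ j ^ 2 / 2))) fun j => by fun_prop]
  congr 1
  ext1 j
  exact hcoord (μ j)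

variable {ι : Type*} [Fintype ι] [DecidableEq ι]

/-- The law of `(X i)` where `X i ~ N(0, I_d)` independently for `i ∈ A`, and, given these and an
independent `z ~ N(0, v I_d)`, `X i ~ N(-β ∑_{l ∈ A} X l - z, I_d)` independently for `i ∉ A`. -/
noncomputable def shiftedSample (d : ℕ) (A : Finset ι) (β : ℝ) (v : ℝ≥0) :
    Measure (ι → Fin d → ℝ) :=
  ((Measure.pi fun _ : ι => gaussPi d 0).prod (Measure.pi fun _ : Fin d => gaussianReal 0 v)).bind
    fun Yz => Measure.pi fun i : ι =>
      if i ∈ A then Measure.dirac (Yz.1 i) else gaussPi d (-(β • ∑ j ∈ A, Yz.1 j) - Yz.2)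

variable (d : ℕ) (A B : Finset ι) (β : ℝ) (v : ℝ≥0)

theorem shiftedSample_eq_withDensity :
    shiftedSample d A β v = (Measure.pi fun _ : ι => gaussPi d 0).withDensity fun X =>
      ∏ j, gaussLR (columnCov A β v) fun i => X i j := by
  let w (y : ι → Fin d → ℝ) (z x : Fin d → ℝ) : ℝ≥0∞ :=
    ∏ j, ENNReal.ofReal (Real.exp ((-(β * ∑ l ∈ A, y l j) - z j) * x j
      - (-(β * ∑ l ∈ A, y l j) - z j) ^ 2 / 2))
  have hw : Measurable fun q : ((ι → Fin d → ℝ) × (Fin d → ℝ)) × (Fin d → ℝ) =>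
      w q.1.1 q.1.2 q.2 := by
    fun_prop
  have hwith (y : ι → Fin d → ℝ) (z : Fin d → ℝ) :
      gaussPi d (-(β • ∑ j ∈ A, y j) - z) = (gaussPi d 0).withDensity (w y z) := by
    rw [gaussPi_eq_withDensity]
    simp [w]
  have hdep (z : Fin d → ℝ) : DependsOn (fun y => w y z) (A : Set ι) := by
    intro y y' hy
    have hsum (j : Fin d) : ∑ l ∈ A, y l j = ∑ l ∈ A, y' l j :=
      Finset.sum_congr rfl fun l hl => by rw [hy l hl]
    simp only [w, hsum]
  have hprob (y : ι → Fin d → ℝ) (z : Fin d → ℝ) :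
      IsProbabilityMeasure ((gaussPi d 0).withDensity (w y z)) := by
    rw [← hwith]
    infer_instance
  simp only [shiftedSample, hwith]
  rw [bind_pi_ite_dirac hw hprob hdep]
  congr 1
  ext X
  simp only [w]
  simp_rw [Finset.prod_comm (s := Aᶜ)]
  rw [lintegral_pi_prod (fun _ => gaussianReal 0 v) (f := fun j z => ∏ i ∈ Aᶜ, ENNReal.ofReal
    (Real.exp ((-(β * ∑ l ∈ A, X l j) - z) * X i j - (-(β * ∑ l ∈ A, X l j) - z) ^ 2 / 2)))
    fun j => by fun_prop]
  simp_rw [lintegral_shifted_column A β v fun i => X i _]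

variable {β v} (hsmall : (|β| + v) * Fintype.card ι < 1 / 2)
include hsmall

theorem isProbabilityMeasure_shiftedSample : IsProbabilityMeasure (shiftedSample d A β v) := by
  refine ⟨?_⟩
  rw [shiftedSample_eq_withDensity, withDensity_apply _ .univ, setLIntegral_univ, gaussPi_zero,
    lintegral_pi_pi_prod (gaussianReal 0 1) (measurable_gaussLR _),
    lintegral_gaussLR (posDef_columnCov A β v hsmall), one_pow]

theorem lintegral_prod_gaussLR_mul_prod_gaussLR (hcard : A.card = B.card) :
    ∫⁻ X : ι → Fin d → ℝ, (∏ j, gaussLR (columnCov A β v) fun i => X i j)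
        * ∏ j, gaussLR (columnCov B β v) fun i => X i j ∂(Measure.pi fun _ => gaussPi d 0)
      = ENNReal.ofReal
        ((√(overlapDet (Fintype.card ι) A.card β v (A ∩ B).card))⁻¹ ^ d) := by
  simp_rw [← Finset.prod_mul_distrib]
  rw [gaussPi_zero, lintegral_pi_pi_prod (gaussianReal 0 1)
      (f := fun x => gaussLR (columnCov A β v) x * gaussLR (columnCov B β v) x)
      ((measurable_gaussLR _).mul (measurable_gaussLR _)),
    lintegral_gaussLR_columnCov_mul A B β v hcard hsmall, Fintype.card_fin,
    ENNReal.ofReal_pow (by positivity)]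

theorem tvDist_mixture_shiftedSample_le_sqrt {k : ℕ} (hk : k ≤ Fintype.card ι) {χ : ℝ}
    (hχ0 : 0 ≤ χ)
    (hχ : ∀ A ∈ (Finset.univ : Finset ι).powersetCard k,
      ∑ B ∈ (Finset.univ : Finset ι).powersetCard k,
          (√(overlapDet (Fintype.card ι) k β v (A ∩ B).card))⁻¹ ^ d
        ≤ (Fintype.card ι).choose k * (1 + χ)) :
    tvDist (Measure.pi fun _ : ι => gaussPi d 0)
        ((((Finset.univ : Finset ι).powersetCard k).card : ℝ≥0∞)⁻¹ •
          ∑ A ∈ (Finset.univ : Finset ι).powersetCard k, shiftedSample d A β v) ≤ √χ := by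
  have hprob (A : Finset ι) := isProbabilityMeasure_shiftedSample d A hsmall
  refine tvDist_uniform_mixture_le_sqrt (Finset.powersetCard_nonempty.2 (by simpa using hk))
    (fun A => ?_) (fun A => shiftedSample_eq_withDensity d A β v) hχ0 fun A hA => ?_
  · exact Finset.measurable_fun_prod _ fun j _ => (measurable_gaussLR _).comp (by fun_prop)
  have hA_card := (Finset.mem_powersetCard.1 hA).2
  calc _ = ∑ B ∈ (Finset.univ : Finset ι).powersetCard k,
          ENNReal.ofReal ((√(overlapDet (Fintype.card ι) k β v (A ∩ B).card))⁻¹ ^ d) := by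
        refine Finset.sum_congr rfl fun B hB => ?_
        rw [lintegral_prod_gaussLR_mul_prod_gaussLR d A B hsmall
          (hA_card.trans (Finset.mem_powersetCard.1 hB).2.symm), hA_card]
    _ ≤ _ := by
        rw [← ENNReal.ofReal_sum_of_nonneg fun B _ => by positivity, ← ENNReal.ofReal_natCast,
          ← ENNReal.ofReal_mul (Nat.cast_nonneg _)]
        refine ENNReal.ofReal_le_ofReal ((hχ A hA).trans_eq ?_)
        rw [Finset.card_powersetCard, Finset.card_univ]

end ShiftedSample

section RandomSubset

theorem choose_sub_sub_le {n k j : ℕ} (hj : j ≤ k) (hk : k ≤ n) :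
    ((n - j).choose (k - j) : ℝ) ≤ n.choose k * ((k : ℝ) / n) ^ j := by
  induction j generalizing n k with
  | zero => simp
  | succ j ih =>
    obtain ⟨k, rfl⟩ : ∃ k', k = k' + 1 := ⟨k - 1, by lia⟩
    obtain ⟨n, rfl⟩ : ∃ n', n = n' + 1 := ⟨n - 1, by lia⟩
    have hkn : (k : ℝ) ≤ n := by exact_mod_cast Nat.le_of_succ_le_succ hk
    have hratio : (k : ℝ) / n ≤ (k + 1 : ℕ) / (n + 1 : ℕ) := by
      rcases n.eq_zero_or_pos with rfl | hn
      · rw [Nat.cast_zero, div_zero]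
        positivity
      · rw [div_le_div_iff₀ (by exact_mod_cast hn) (by positivity)]
        push_cast
        linarith
    have habsorb : (n.choose k : ℝ) = (n + 1).choose (k + 1) * ((k + 1 : ℕ) / (n + 1 : ℕ)) := by
      rw [← mul_div_assoc, eq_div_iff (by positivity), mul_comm]
      exact_mod_cast Nat.add_one_mul_choose_eq n k
    rw [Nat.add_sub_add_right, Nat.add_sub_add_right]
    calc ((n - j).choose (k - j) : ℝ) ≤ n.choose k * ((k : ℝ) / n) ^ j := ih (by lia) (by lia)
      _ ≤ n.choose k * ((k + 1 : ℕ) / (n + 1 : ℕ)) ^ j := by gcongr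
      _ = _ := by rw [habsorb, pow_succ']; ring

variable {ι : Type*} [Fintype ι] [DecidableEq ι] {k : ℕ} (hk : k ≤ Fintype.card ι)
include hk

theorem card_filter_superset_powersetCard_le (J : Finset ι) :
    ((((Finset.univ : Finset ι).powersetCard k).filter fun B => J ⊆ B).card : ℝ)
      ≤ (Fintype.card ι).choose k * ((k : ℝ) / Fintype.card ι) ^ J.card := by
  rcases le_or_gt J.card k with hJ | hJ
  · rw [Finset.card_filter_powersetCard_subset J _ k J.subset_univ hJ, Finset.card_univ]
    exact choose_sub_sub_le hJ hk
  · rw [Finset.filter_eq_empty_iff.2, Finset.card_empty, Nat.cast_zero]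
    · positivity
    · intro B hB hJB
      exact hJ.not_ge ((Finset.card_le_card hJB).trans_eq (Finset.mem_powersetCard.1 hB).2)

theorem sum_powersetCard_pow_card_inter_le (A : Finset ι) {u : ℝ} (hu : 0 ≤ u) :
    ∑ B ∈ (Finset.univ : Finset ι).powersetCard k, (1 + u) ^ (A ∩ B).card
      ≤ (Fintype.card ι).choose k * (1 + (k : ℝ) / Fintype.card ι * u) ^ A.card := by
  have hbinom (t : ℝ) (S : Finset ι) : (1 + t) ^ S.card = ∑ J ∈ S.powerset, t ^ J.card := by
    simpa [add_comm] using (Finset.sum_pow_mul_eq_add_pow t 1 S).symm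
  have hexpand (B : Finset ι) :
      (1 + u) ^ (A ∩ B).card = ∑ J ∈ A.powerset, if J ⊆ B then u ^ J.card else 0 := by
    rw [hbinom, ← Finset.sum_filter]
    congr 1
    ext J
    simp only [Finset.mem_powerset, Finset.mem_filter, Finset.subset_inter_iff]
  simp_rw [hexpand]
  rw [Finset.sum_comm, hbinom, Finset.mul_sum]
  refine Finset.sum_le_sum fun J _ => ?_
  rw [← Finset.sum_filter, Finset.sum_const, nsmul_eq_mul, mul_pow, ← mul_assoc]
  gcongr
  exact card_filter_superset_powersetCard_le hk J

theorem sum_powersetCard_exp_card_inter_le (A : Finset ι) {τ : ℝ} (hτ0 : 0 ≤ τ) (hτ1 : τ ≤ 1) :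
    ∑ B ∈ (Finset.univ : Finset ι).powersetCard k,
        Real.exp (τ * ((A ∩ B).card - A.card * ((k : ℝ) / Fintype.card ι)))
      ≤ (Fintype.card ι).choose k
        * Real.exp (A.card * ((k : ℝ) / Fintype.card ι) * τ ^ 2) := by
  set p : ℝ := (k : ℝ) / Fintype.card ι
  have hexp_nonneg : 0 ≤ Real.exp τ - 1 := by linarith [Real.one_le_exp hτ0]
  have hexp_quad : Real.exp τ - 1 ≤ τ + τ ^ 2 := by
    have := (abs_le.1 (Real.abs_exp_sub_one_sub_id_le (abs_le.2 ⟨by linarith, hτ1⟩))).2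
    linarith
  have hpow : (1 + p * (Real.exp τ - 1)) ^ A.card ≤ Real.exp (A.card * p * (τ + τ ^ 2)) := by
    calc (1 + p * (Real.exp τ - 1)) ^ A.card ≤ Real.exp (p * (τ + τ ^ 2)) ^ A.card := by
          gcongr
          have : p * (Real.exp τ - 1) ≤ p * (τ + τ ^ 2) := by gcongr
          linarith [Real.add_one_le_exp (p * (τ + τ ^ 2))]
      _ = _ := by rw [← Real.exp_nat_mul, mul_assoc]
  calc _ = Real.exp (-(A.card * p * τ)) * ∑ B ∈ (Finset.univ : Finset ι).powersetCard k,
          (1 + (Real.exp τ - 1)) ^ (A ∩ B).card := by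
        rw [Finset.mul_sum]
        refine Finset.sum_congr rfl fun B _ => ?_
        rw [add_sub_cancel, ← Real.exp_nat_mul, ← Real.exp_add]
        congr 1
        ring
    _ ≤ Real.exp (-(A.card * p * τ))
          * ((Fintype.card ι).choose k * Real.exp (A.card * p * (τ + τ ^ 2))) := by
        gcongr
        exact (sum_powersetCard_pow_card_inter_le hk A hexp_nonneg).trans (by gcongr)
    _ = _ := by
        rw [mul_left_comm, ← Real.exp_add]
        congr 2
        ring

end RandomSubset

section OverlapSum

theorem inv_sqrt_le_exp {y Δ : ℝ} (hy0 : 0 ≤ y) (hy : y ≤ 1 / 2) (h : 1 - y ≤ Δ) :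
    (√Δ)⁻¹ ≤ Real.exp y := by
  have hsq : Real.exp (-y) ^ 2 ≤ Δ := by
    rw [← Real.exp_nat_mul, Nat.cast_ofNat, mul_neg, Real.exp_neg]
    refine ((inv_le_iff_one_le_mul₀ (Real.exp_pos _)).2 ?_).trans h
    nlinarith [Real.add_one_le_exp (2 * y)]
  rw [← neg_neg y, Real.exp_neg (-y)]
  exact inv_anti₀ (Real.exp_pos _) (Real.le_sqrt_of_sq_le hsq)

theorem exp_mul_max_zero_le {ρ : ℝ} (hρ0 : 0 < ρ) (hρ1 : ρ ≤ 1) (T x : ℝ) :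
    Real.exp (T * max x 0) ≤ 1 + ρ * Real.exp (T / ρ * x) := by
  rcases le_total x 0 with hx | hx
  · rw [max_eq_right hx, mul_zero, Real.exp_zero]
    linarith [mul_pos hρ0 (Real.exp_pos (T / ρ * x))]
  · rw [max_eq_left hx]
    have hbernoulli := one_add_mul_self_le_rpow_one_add
      (s := Real.exp (T * x) - 1) (by linarith [Real.exp_pos (T * x)]) ((one_le_inv₀ hρ0).2 hρ1)
    rw [add_sub_cancel, ← Real.exp_mul, show T * x * ρ⁻¹ = T / ρ * x by ring] at hbernoulli
    calc Real.exp (T * x) ≤ 1 + ρ * (1 + ρ⁻¹ * (Real.exp (T * x) - 1)) := by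
          rw [mul_add, mul_inv_cancel_left₀ hρ0.ne']
          linarith
      _ ≤ _ := by gcongr

section OverlapDet

variable {n ε β v r : ℝ} (hn : 0 ≤ n) (hε0 : 0 ≤ ε) (hε : ε ≤ 1 / 10)
  (hr0 : 0 ≤ r) (hr : r ≤ ε * n)
include hn hε0 hε hr0 hr

theorem sq_overlap_deviation_le :
    (2 * (1 + ε) * (r - ε ^ 2 * n) - 2 * ε ^ 2 * (1 - ε) * n) ^ 2
      ≤ 8 * ε ^ 4 * n ^ 2 + 2 * n * |r - ε ^ 2 * n| := by
  have hεn : ε ^ 2 * n ≤ ε * n := by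
    gcongr
    nlinarith
  set x := r - ε ^ 2 * n
  have habs : |x| ≤ ε * n := abs_le.2 ⟨by linarith, by linarith [mul_nonneg (sq_nonneg ε) hn]⟩
  have hcenter : (2 * ε ^ 2 * (1 - ε) * n) ^ 2 ≤ 4 * ε ^ 4 * n ^ 2 := by
    calc (2 * ε ^ 2 * (1 - ε) * n) ^ 2 = 4 * ε ^ 4 * n ^ 2 * (1 - ε) ^ 2 := by ring
      _ ≤ 4 * ε ^ 4 * n ^ 2 * 1 := by gcongr; nlinarith
      _ = _ := mul_one _
  have hdeviation : (2 * (1 + ε) * x) ^ 2 ≤ n * |x| := by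
    calc (2 * (1 + ε) * x) ^ 2 = 4 * (1 + ε) ^ 2 * (|x| * |x|) := by rw [abs_mul_abs_self]; ring
      _ ≤ 4 * (1 + ε) ^ 2 * (ε * n * |x|) := by gcongr
      _ = 4 * (1 + ε) ^ 2 * ε * (n * |x|) := by ring
      _ ≤ 1 * (n * |x|) := by gcongr; nlinarith
      _ = _ := one_mul _
  linarith [add_sq_le (a := 2 * (1 + ε) * x) (b := -(2 * ε ^ 2 * (1 - ε) * n)),
    neg_sq (2 * ε ^ 2 * (1 - ε) * n)]

variable (hv : v + β ^ 2 * (ε * n) = 2 * β * ε)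
include hv

theorem one_sub_le_overlapDet :
    1 - (8 * β ^ 2 * ε ^ 4 * n ^ 2 + 4 * β ^ 2 * n * max (r - ε ^ 2 * n) 0)
      ≤ overlapDet n (ε * n) β v r := by
  have hdev := mul_le_mul_of_nonneg_left (sq_overlap_deviation_le hn hε0 hε hr0 hr) (sq_nonneg β)
  have hdet : overlapDet n (ε * n) β v r = (1 - β ^ 2 * n * (r - ε ^ 2 * n)) ^ 2
      - β ^ 2 * (2 * (1 + ε) * (r - ε ^ 2 * n) - 2 * ε ^ 2 * (1 - ε) * n) ^ 2 := by
    rw [overlapDet, hv]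
    ring
  rw [hdet]
  set x := r - ε ^ 2 * n
  have hmax : 2 * β ^ 2 * n * (x + |x|) = 4 * β ^ 2 * n * max x 0 := by
    rw [add_abs_eq_two_nsmul_posPart, posPart_def, nsmul_eq_mul]
    ring
  linarith [sq_nonneg (β ^ 2 * n * x)]

theorem inv_sqrt_overlapDet_pow_le (hβ : (β * n) ^ 2 ≤ 1) (d : ℕ) :
    (√(overlapDet n (ε * n) β v r))⁻¹ ^ d
      ≤ Real.exp (8 * d * β ^ 2 * ε ^ 4 * n ^ 2)
        * Real.exp (4 * d * β ^ 2 * n * max (r - ε ^ 2 * n) 0) := by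
  set y := 8 * β ^ 2 * ε ^ 4 * n ^ 2 + 4 * β ^ 2 * n * max (r - ε ^ 2 * n) 0 with hy
  have hmax : max (r - ε ^ 2 * n) 0 ≤ ε * n :=
    max_le (by linarith [mul_nonneg (sq_nonneg ε) hn]) (by positivity)
  have hy_half : y ≤ 1 / 2 := by
    calc y ≤ 8 * β ^ 2 * ε ^ 4 * n ^ 2 + 4 * β ^ 2 * n * (ε * n) := by rw [hy]; gcongr
      _ = (β * n) ^ 2 * (8 * ε ^ 4 + 4 * ε) := by ring
      _ ≤ 1 * (8 * (1 / 10) ^ 4 + 4 * (1 / 10)) := by gcongr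
      _ ≤ 1 / 2 := by norm_num
  calc (√(overlapDet n (ε * n) β v r))⁻¹ ^ d ≤ Real.exp y ^ d := by
        gcongr
        exact inv_sqrt_le_exp (by positivity) hy_half
          (one_sub_le_overlapDet hn hε0 hε hr0 hr hv)
    _ = _ := by
        rw [← Real.exp_nat_mul, ← Real.exp_add, hy]
        congr 1
        ring

end OverlapDet

theorem exp_mul_one_add_three_mul_le {s ρ : ℝ} (hs : s ≤ ρ) (hρ0 : 0 ≤ ρ) (hρ : ρ ≤ 1 / 5) :
    Real.exp s * (1 + 3 * ρ) ≤ 1 + 5 * ρ := by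
  have hexp : Real.exp ρ - 1 - ρ ≤ ρ ^ 2 :=
    (abs_le.1 (Real.abs_exp_sub_one_sub_id_le (abs_le.2 ⟨by linarith, by linarith⟩))).2
  calc Real.exp s * (1 + 3 * ρ) ≤ (1 + ρ + ρ ^ 2) * (1 + 3 * ρ) := by
        gcongr
        linarith [Real.exp_le_exp.2 hs]
    _ ≤ 1 + 5 * ρ := by nlinarith [mul_nonneg hρ0 (sub_nonneg.2 hρ), pow_nonneg hρ0 3]

variable {ι : Type*} [Fintype ι] [DecidableEq ι]

theorem sum_inv_sqrt_overlapDet_pow_le {k d : ℕ} {ε β v ρ : ℝ} {A : Finset ι} (hA : A.card = k)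
    (hk : (k : ℝ) = ε * Fintype.card ι) (hι : Fintype.card ι ≠ 0)
    (hε0 : 0 ≤ ε) (hε : ε ≤ 1 / 10)
    (hv : v + β ^ 2 * (ε * Fintype.card ι) = 2 * β * ε) (hβ : (β * Fintype.card ι) ^ 2 ≤ 1)
    (hρ0 : 0 < ρ) (hρ : ρ ≤ 1 / 5)
    (hmean : 8 * d * β ^ 2 * ε ^ 4 * Fintype.card ι ^ 2 ≤ ρ)
    (hslope : 4 * d * β ^ 2 * Fintype.card ι ≤ ρ)
    (hvar : ε ^ 2 * Fintype.card ι * (4 * d * β ^ 2 * Fintype.card ι) ^ 2 ≤ ρ ^ 2) :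
    ∑ B ∈ (Finset.univ : Finset ι).powersetCard k,
        (√(overlapDet (Fintype.card ι) k β v (A ∩ B).card))⁻¹ ^ d
      ≤ (Fintype.card ι).choose k * (1 + 5 * ρ) := by
  have hkn : k ≤ Fintype.card ι := hA ▸ A.card_le_univ
  have hkdiv : (k : ℝ) / Fintype.card ι = ε := by
    rw [hk, mul_div_cancel_right₀ _ (by exact_mod_cast hι)]
  set n := (Fintype.card ι : ℝ) with hn
  set s := 8 * d * β ^ 2 * ε ^ 4 * n ^ 2
  set T := 4 * d * β ^ 2 * n
  set S := (Finset.univ : Finset ι).powersetCard k with hS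
  have hpointwise (B : Finset ι) : (√(overlapDet n k β v (A ∩ B).card))⁻¹ ^ d
      ≤ Real.exp s * (1 + ρ * Real.exp (T / ρ * ((A ∩ B).card - ε ^ 2 * n))) := by
    have hr : ((A ∩ B).card : ℝ) ≤ ε * n := by
      rw [← hk, ← hA]
      exact_mod_cast Finset.card_le_card Finset.inter_subset_left
    rw [hk]
    refine (inv_sqrt_overlapDet_pow_le (Nat.cast_nonneg _) hε0 hε (Nat.cast_nonneg _) hr hv hβ
      d).trans ?_
    gcongr
    exact exp_mul_max_zero_le hρ0 (by linarith) T _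
  have hmgf : ∑ B ∈ S, Real.exp (T / ρ * ((A ∩ B).card - ε ^ 2 * n))
      ≤ (Fintype.card ι).choose k * 3 := by
    have h := sum_powersetCard_exp_card_inter_le hkn A (τ := T / ρ) (by positivity)
      ((div_le_one hρ0).2 hslope)
    rw [← hn, hA, hkdiv, hk, show ε * n * ε = ε ^ 2 * n by ring] at h
    have hexponent : ε ^ 2 * n * (T / ρ) ^ 2 ≤ 1 := by
      rwa [div_pow, ← mul_div_assoc, div_le_one (by positivity)]
    refine h.trans ?_
    gcongr
    linarith [Real.exp_le_exp.2 hexponent, Real.exp_one_lt_d9]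
  calc _ ≤ ∑ B ∈ S, Real.exp s * (1 + ρ * Real.exp (T / ρ * ((A ∩ B).card - ε ^ 2 * n))) :=
        Finset.sum_le_sum fun B _ => hpointwise B
    _ = Real.exp s * ((Fintype.card ι).choose k
          + ρ * ∑ B ∈ S, Real.exp (T / ρ * ((A ∩ B).card - ε ^ 2 * n))) := by
        rw [← Finset.mul_sum, Finset.sum_add_distrib, ← Finset.mul_sum, Finset.sum_const,
          nsmul_one, hS, Finset.card_powersetCard, Finset.card_univ]
    _ ≤ Real.exp s * ((Fintype.card ι).choose k + ρ * ((Fintype.card ι).choose k * 3)) := by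
        gcongr
    _ = (Fintype.card ι).choose k * (Real.exp s * (1 + 3 * ρ)) := by ring
    _ ≤ _ := by
        gcongr
        exact exp_mul_one_add_three_mul_le hmean hρ0.le hρ

end OverlapSum

section ShiftCoefficient

theorem one_sub_sqrt_one_sub_le {u : ℝ} (hu0 : 0 ≤ u) (hu1 : u ≤ 1) : 1 - √(1 - u) ≤ u := by
  have := Real.le_sqrt_of_sq_le (show (1 - u) ^ 2 ≤ 1 - u by nlinarith)
  linarith

variable {n d ε α : ℝ} (hd : 0 < d) (hε : 0 < ε)
include hd hε

theorem shift_nonneg {β : ℝ} (hn : 0 ≤ n)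
    (hβ : β = (1 / n) * (1 - √(1 - α ^ 2 * n / (d * ε)))) : 0 ≤ β := by
  have : √(1 - α ^ 2 * n / (d * ε)) ≤ 1 := Real.sqrt_le_one.2 (sub_le_self 1 (by positivity))
  rw [hβ]
  exact mul_nonneg (by positivity) (sub_nonneg.2 this)

variable {β : ℝ} (hn : 0 < n) (hβ : β = (1 / n) * (1 - √(1 - α ^ 2 * n / (d * ε))))
  (hα : α ^ 2 * n ≤ d * ε)
include hn hβ hα

theorem shift_variance_identity : α ^ 2 / d + β ^ 2 * (ε * n) = 2 * β * ε := by
  have hu : α ^ 2 * n / (d * ε) ≤ 1 := (div_le_one (by positivity)).2 hα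
  have hsq : √(1 - α ^ 2 * n / (d * ε)) ^ 2 = 1 - α ^ 2 * n / (d * ε) := Real.sq_sqrt (by linarith)
  have hroot : √(1 - α ^ 2 * n / (d * ε)) = 1 - β * n := by
    rw [hβ]
    field_simp
    ring
  rw [hroot] at hsq
  field_simp at hsq ⊢
  refine mul_left_cancel₀ hn.ne' ?_
  linear_combination hsq

theorem shift_le : β ≤ α ^ 2 / (d * ε) := by
  have hu : α ^ 2 * n / (d * ε) ≤ 1 := (div_le_one (by positivity)).2 hα
  calc β ≤ (1 / n) * (α ^ 2 * n / (d * ε)) := by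
        rw [hβ]
        gcongr
        exact one_sub_sqrt_one_sub_le (by positivity) hu
    _ = α ^ 2 / (d * ε) := by field_simp

end ShiftCoefficient

/-- The range of sample sizes `n` covered by the lower bound, with its absolute constant `c`. The
upper bound `le_mul_min` is the threshold below which the contamination is invisible. The lower
bound `add_le` forces `ε` to be small and is used in the form `ε ≤ t` and `1 ≤ t ε² n`, where `t` is
the `overlapRate`. -/
structure ObliviousRegime (n d ε α c : ℝ) : Prop where
  d_pos : 0 < d
  ε_pos : 0 < ε
  α_pos : 0 < α
  le_mul_min : n ≤ c * min (d ^ ((2 : ℝ) / 3) * ε ^ ((2 : ℝ) / 3) / α ^ ((8 : ℝ) / 3))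
    (d * ε / α ^ 2)
  add_le : √d / α ^ 2 + d * ε ^ 3 / α ^ 4 ≤ n

/-- The scale `n α⁴ / (d ε²)` of `d β² n`, the growth rate in the overlap `|A ∩ B|` of the logarithm
of the correlation between the mixture components with clean sets `A` and `B`. -/
noncomputable def overlapRate (n d ε α : ℝ) : ℝ :=
  n * α ^ 4 / (d * ε ^ 2)

namespace ObliviousRegime

variable {n d ε α c : ℝ} (h : ObliviousRegime n d ε α c)
include h

theorem sqrt_div_le : √d / α ^ 2 ≤ n := by
  have ⟨_, _, _, _, hadd⟩ := h
  exact le_of_add_le_of_nonneg_left hadd (by positivity)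

theorem mul_cube_div_le : d * ε ^ 3 / α ^ 4 ≤ n := by
  have ⟨_, _, _, _, hadd⟩ := h
  exact le_of_add_le_of_nonneg_right hadd (by positivity)

theorem n_pos : 0 < n := by
  have ⟨_, _, _, _, _⟩ := h
  exact lt_of_lt_of_le (by positivity) h.sqrt_div_le

theorem c_pos : 0 < c := by
  have ⟨_, _, _, hmin, _⟩ := h
  exact pos_of_mul_pos_left (h.n_pos.trans_le hmin) (by positivity)

theorem sq_mul_le : α ^ 2 * n ≤ c * (d * ε) := by
  have ⟨_, _, _, hmin, _⟩ := h
  have := hmin.trans (mul_le_mul_of_nonneg_left (min_le_right _ _) h.c_pos.le)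
  rwa [← mul_div_assoc, le_div_iff₀ (by positivity), mul_comm] at this

theorem cube_mul_pow_eight_le : n ^ 3 * α ^ 8 ≤ c ^ 3 * (d ^ 2 * ε ^ 2) := by
  have ⟨hd, hε, hα, hmin, _⟩ := h
  have hn := h.n_pos
  have hcube {x : ℝ} (hx : 0 < x) (m : ℕ) : (x ^ ((m : ℝ) / 3)) ^ 3 = x ^ m := by
    rw [← Real.rpow_mul_natCast hx.le, Nat.cast_ofNat, div_mul_cancel₀ _ three_ne_zero,
      Real.rpow_natCast]
  have hd3 := hcube hd 2
  have hε3 := hcube hε 2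
  have hα3 := hcube hα 8
  push_cast at hd3 hε3 hα3
  rw [← le_div_iff₀ (by positivity)]
  calc n ^ 3 ≤ (c * (d ^ ((2 : ℝ) / 3) * ε ^ ((2 : ℝ) / 3) / α ^ ((8 : ℝ) / 3))) ^ 3 := by
        gcongr
        exact hmin.trans (mul_le_mul_of_nonneg_left (min_le_left _ _) h.c_pos.le)
    _ = c ^ 3 * (d ^ 2 * ε ^ 2) / α ^ 8 := by
        rw [mul_pow, div_pow, mul_pow, hd3, hε3, hα3, ← mul_div_assoc]

theorem le_overlapRate : ε ≤ overlapRate n d ε α := by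
  have ⟨_, _, _, _, _⟩ := h
  have := (div_le_iff₀ (by positivity)).1 h.mul_cube_div_le
  rw [overlapRate, le_div_iff₀ (by positivity)]
  linarith

theorem one_le_overlapRate_mul : 1 ≤ overlapRate n d ε α * (ε ^ 2 * n) := by
  have ⟨hd, _, _, _, _⟩ := h
  have hn := h.n_pos
  have hsqrt := (div_le_iff₀ (by positivity)).1 h.sqrt_div_le
  rw [Real.sqrt_le_left (by positivity)] at hsqrt
  have : overlapRate n d ε α * (ε ^ 2 * n) = (n * α ^ 2) ^ 2 / d := by
    rw [overlapRate]
    field_simp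
  rwa [this, one_le_div hd]

theorem sq_overlapRate_mul_le : overlapRate n d ε α ^ 2 * (ε ^ 2 * n) ≤ c ^ 3 := by
  have ⟨_, _, _, _, _⟩ := h
  have : overlapRate n d ε α ^ 2 * (ε ^ 2 * n) = n ^ 3 * α ^ 8 / (d ^ 2 * ε ^ 2) := by
    rw [overlapRate]
    field_simp
  rw [this, div_le_iff₀ (by positivity)]
  exact h.cube_mul_pow_eight_le

theorem overlapRate_le : overlapRate n d ε α ≤ c ^ 3 := by
  calc overlapRate n d ε α
      ≤ overlapRate n d ε α * (overlapRate n d ε α * (ε ^ 2 * n)) :=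
        le_mul_of_one_le_right (h.ε_pos.le.trans h.le_overlapRate) h.one_le_overlapRate_mul
    _ = overlapRate n d ε α ^ 2 * (ε ^ 2 * n) := by ring
    _ ≤ c ^ 3 := h.sq_overlapRate_mul_le

variable {β : ℝ} (hc : c ≤ 1)
include hc

theorem sq_mul_le_one : α ^ 2 * n ≤ d * ε := by
  have ⟨_, _, _, _, _⟩ := h
  exact h.sq_mul_le.trans (mul_le_of_le_one_left (by positivity) hc)

theorem ε_le : ε ≤ c := by
  calc ε ≤ c ^ 3 := h.le_overlapRate.trans h.overlapRate_le
    _ ≤ c := pow_le_of_le_one h.c_pos.le hc three_ne_zero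

variable (hβ : β = (1 / n) * (1 - √(1 - α ^ 2 * n / (d * ε))))
include hβ

theorem mul_sq_shift_mul_le : d * β ^ 2 * n ≤ overlapRate n d ε α := by
  have ⟨hd, hε, _, _, _⟩ := h
  have hn := h.n_pos
  have hβ0 := shift_nonneg hd hε hn.le hβ
  calc d * β ^ 2 * n ≤ d * (α ^ 2 / (d * ε)) ^ 2 * n := by
        gcongr
        exact shift_le hd hε hn hβ (h.sq_mul_le_one hc)
    _ = overlapRate n d ε α := by
        rw [overlapRate]
        field_simp

theorem abs_shift_add_variance_mul_le : (|β| + α ^ 2 / d) * n ≤ 2 * c := by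
  have ⟨hd, hε, _, _, _⟩ := h
  have hn := h.n_pos
  rw [abs_of_nonneg (shift_nonneg hd hε hn.le hβ)]
  calc (β + α ^ 2 / d) * n ≤ (α ^ 2 / (d * ε) + α ^ 2 / (d * ε)) * n := by
        gcongr
        · exact shift_le hd hε hn hβ (h.sq_mul_le_one hc)
        · exact mul_le_of_le_one_right hd.le ((h.ε_le hc).trans hc)
    _ = 2 * (α ^ 2 * n / (d * ε)) := by ring
    _ ≤ 2 * c := by
        gcongr
        exact (div_le_iff₀ (by positivity)).2 h.sq_mul_le

theorem slope_exponent_le : 4 * d * β ^ 2 * n ≤ 4 * c ^ 3 := by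
  linarith [h.mul_sq_shift_mul_le hc hβ, h.overlapRate_le]

theorem mean_exponent_le : 8 * d * β ^ 2 * ε ^ 4 * n ^ 2 ≤ 8 * c ^ 3 := by
  have ⟨_, hε, _, _, _⟩ := h
  have hn := h.n_pos
  have hrate := h.mul_sq_shift_mul_le hc hβ
  have hεt := h.le_overlapRate
  set t := overlapRate n d ε α
  have ht : 0 < t := hε.trans_le hεt
  have hsq : ε ^ 2 ≤ t := (pow_le_of_le_one hε.le ((h.ε_le hc).trans hc) two_ne_zero).trans hεt
  calc 8 * d * β ^ 2 * ε ^ 4 * n ^ 2 = 8 * (d * β ^ 2 * n * ε ^ 2 * (ε ^ 2 * n)) := by ring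
    _ ≤ 8 * (t * t * (ε ^ 2 * n)) := by gcongr
    _ ≤ 8 * c ^ 3 := by linarith [h.sq_overlapRate_mul_le]

theorem variance_exponent_le : ε ^ 2 * n * (4 * d * β ^ 2 * n) ^ 2 ≤ 16 * c ^ 3 := by
  have ⟨_, _, _, _, _⟩ := h
  have hn := h.n_pos
  have hrate := h.mul_sq_shift_mul_le hc hβ
  set t := overlapRate n d ε α
  calc ε ^ 2 * n * (4 * d * β ^ 2 * n) ^ 2 = 16 * ((d * β ^ 2 * n) ^ 2 * (ε ^ 2 * n)) := by ring
    _ ≤ 16 * (t ^ 2 * (ε ^ 2 * n)) := by gcongr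
    _ ≤ 16 * c ^ 3 := by linarith [h.sq_overlapRate_mul_le]

end ObliviousRegime

section LowerBound

variable {n d k : ℕ} {ε α β c ρ : ℝ} (h : ObliviousRegime n d ε α c) (hk : (k : ℝ) = ε * n)
  (hβ : β = (1 / (n : ℝ)) * (1 - √(1 - α ^ 2 * n / (d * ε))))
  (hρ0 : 0 < ρ) (hρ : ρ ≤ 1 / 5) (hc : 16 * c ≤ ρ ^ 2)
include h hk hβ hρ0 hρ hc

theorem ObliviousRegime.sum_correlation_le {A : Finset (Fin n)} (hA : A.card = k) :
    ∑ B ∈ (Finset.univ : Finset (Fin n)).powersetCard k,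
        (√(overlapDet n k β (α ^ 2 / d) (A ∩ B).card))⁻¹ ^ d ≤ n.choose k * (1 + 5 * ρ) := by
  have ⟨hd, hε, _, _, _⟩ := h
  have hn := h.n_pos
  have hρ_sq : ρ ^ 2 ≤ ρ / 5 := by nlinarith
  have hc1 : c ≤ 1 := by linarith
  have hc_cube : c ^ 3 ≤ c := pow_le_of_le_one h.c_pos.le hc1 three_ne_zero
  have hβn : (β * n) ^ 2 ≤ 1 := by
    have hβ_abs : |β| * n ≤ 1 := by
      calc |β| * n ≤ (|β| + α ^ 2 / d) * n := by
            gcongr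
            exact le_add_of_nonneg_right (by positivity)
        _ ≤ 1 := by linarith [h.abs_shift_add_variance_mul_le hc1 hβ]
    rwa [sq_le_one_iff_abs_le_one, abs_mul, Nat.abs_cast]
  have hn_ne : n ≠ 0 := by exact_mod_cast hn.ne'
  have hε_le : ε ≤ 1 / 10 := by linarith [h.ε_le hc1]
  have hvar_id := shift_variance_identity hd hε hn hβ (h.sq_mul_le_one hc1)
  have hmean : 8 * d * β ^ 2 * ε ^ 4 * n ^ 2 ≤ ρ := by linarith [h.mean_exponent_le hc1 hβ]
  have hslope : 4 * d * β ^ 2 * n ≤ ρ := by linarith [h.slope_exponent_le hc1 hβ]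
  have hvar : ε ^ 2 * n * (4 * d * β ^ 2 * n) ^ 2 ≤ ρ ^ 2 := by
    linarith [h.variance_exponent_le hc1 hβ]
  rw [← Fintype.card_fin n] at hk hn_ne hvar_id hβn hmean hslope hvar
  simpa only [Fintype.card_fin] using sum_inv_sqrt_overlapDet_pow_le hA hk hn_ne hε.le
    hε_le hvar_id hβn hρ0 hρ hmean hslope hvar

theorem ObliviousRegime.tvDist_le_sqrt :
    tvDist (Measure.pi fun _ : Fin n => gaussPi d 0)
        ((((Finset.univ : Finset (Fin n)).powersetCard k).card : ℝ≥0∞)⁻¹ •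
          ∑ A ∈ (Finset.univ : Finset (Fin n)).powersetCard k,
            shiftedSample d A β (Real.toNNReal (α ^ 2 / d))) ≤ √(5 * ρ) := by
  have hc1 : c ≤ 1 / 400 := by nlinarith
  have hv : ((α ^ 2 / d).toNNReal : ℝ) = α ^ 2 / d := Real.coe_toNNReal _ (by positivity)
  refine tvDist_mixture_shiftedSample_le_sqrt d ?_ ?_ (by positivity) fun A hA => ?_
  · rw [hv, Fintype.card_fin]
    linarith [h.abs_shift_add_variance_mul_le (by linarith) hβ]
  · rw [Fintype.card_fin, ← Nat.cast_le (α := ℝ), hk]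
    exact mul_le_of_le_one_left h.n_pos.le (by linarith [h.ε_le (by linarith)])
  · rw [hv, Fintype.card_fin]
    exact h.sum_correlation_le hk hβ hρ0 hρ hc (Finset.mem_powersetCard.1 hA).2

end LowerBound

theorem oblivious_lower_bound_general {δ : ℝ} (hδ : 0 < δ) : ∃ c : ℝ, 0 < c ∧
    ∀ (n d : ℕ) (ε α β : ℝ) (k : ℕ),
      0 < d → 0 < ε → 0 < α →
      (k : ℝ) = ε * n →
      β = (1 / (n : ℝ)) * (1 - √(1 - α ^ 2 * n / (d * ε))) →
      (n : ℝ) ≤ c * min ((d : ℝ) ^ ((2 : ℝ) / 3) * ε ^ ((2 : ℝ) / 3) / α ^ ((8 : ℝ) / 3))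
          ((d : ℝ) * ε / α ^ 2) →
      √d / α ^ 2 + d * ε ^ 3 / α ^ 4 ≤ n →
      tvDist
        (Measure.pi fun _ : Fin n => gaussPi d 0)
        (((Finset.powersetCard k (Finset.univ : Finset (Fin n))).card : ℝ≥0∞)⁻¹ •
          ∑ A ∈ Finset.powersetCard k (Finset.univ : Finset (Fin n)),
            shiftedSample d A β (Real.toNNReal (α ^ 2 / d)))
        ≤ δ := by
  set ρ := min 1 (δ ^ 2) / 5 with hρ_def
  have hρ0 : 0 < ρ := by positivity
  have hρ : ρ ≤ 1 / 5 := by linarith [min_le_left 1 (δ ^ 2)]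
  have hρδ : 5 * ρ ≤ δ ^ 2 := by linarith [min_le_right 1 (δ ^ 2)]
  refine ⟨ρ ^ 2 / 16, by positivity, fun n d ε α β k hd hε hα hk hβ hupper hlower => ?_⟩
  have h : ObliviousRegime n d ε α (ρ ^ 2 / 16) :=
    ⟨by exact_mod_cast hd, hε, hα, hupper, hlower⟩
  exact (h.tvDist_le_sqrt hk hβ hρ0 hρ (by linarith)).trans (Real.sqrt_le_iff.2 ⟨hδ.le, hρδ⟩)

/-- (Oblivious lower bound.) Let `D₀ = N(0, I_d)^⊗n` and let `D₁` be obtained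
by choosing a uniformly random subset `A ⊆ [n]` of size `εn = k`, drawing `{Xᵢ}_{i∈A}` i.i.d.
from `N(0, I_d)`, setting `R_A = Σ_{i∈A} Xᵢ`, drawing `z ~ N(0, (α²/d)·I_d)` independently,
setting `μ = −β·R_A − z` with `β = (1/n)(1 − √(1 − α²n/(dε)))`, and drawing `{Xᵢ}_{i∉A}`
i.i.d. from `N(μ, I_d)`. There is a sufficiently small absolute constant `c > 0` such that if
`n ≤ c·min(d^{2/3}ε^{2/3}/α^{8/3}, dε/α²)` and `n ≥ √d/α² + dε³/α⁴`, then
`d_TV(D₀, D₁) ≤ 0.1`. -/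
theorem oblivious_lower_bound : ∃ c : ℝ, 0 < c ∧
    ∀ (n d : ℕ) (ε α β : ℝ) (k : ℕ),
      0 < n → 0 < d → 0 < ε → ε ≤ α → α ≤ 1 →
      (k : ℝ) = ε * n →
      α ^ 2 * n < d * ε →
      β = (1 / (n : ℝ)) * (1 - Real.sqrt (1 - α ^ 2 * n / (d * ε))) →
      (n : ℝ) ≤ c * min ((d : ℝ) ^ ((2 : ℝ) / 3) * ε ^ ((2 : ℝ) / 3) / α ^ ((8 : ℝ) / 3))
          ((d : ℝ) * ε / α ^ 2) →
      (n : ℝ) ≥ Real.sqrt d / α ^ 2 + d * ε ^ 3 / α ^ 4 →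
      tvDist
        (Measure.pi fun _ : Fin n => gaussPi d 0)
        (((Finset.powersetCard k (Finset.univ : Finset (Fin n))).card : ℝ≥0∞)⁻¹ •
          ∑ A ∈ Finset.powersetCard k (Finset.univ : Finset (Fin n)),
            ((Measure.pi fun _ : Fin n => gaussPi d 0).prod
                (Measure.pi fun _ : Fin d =>
                  gaussianReal 0 (Real.toNNReal (α ^ 2 / d)))).bind
              fun Yz => Measure.pi fun i : Fin n =>
                if i ∈ A then Measure.dirac (Yz.1 i)
                else gaussPi d (-(β • ∑ j ∈ A, Yz.1 j) - Yz.2))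
        ≤ 0.1 := by
  obtain ⟨c, hc, h⟩ := oblivious_lower_bound_general (δ := 0.1) (by norm_num)
  exact ⟨c, hc, fun n d ε α β k _ hd hε hεα _ hk _ hβ hupper hlower =>
    h n d ε α β k hd hε (hε.trans_le hεα) hk hβ hupper hlower⟩
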